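/- Let K be a field, F ∈ K[x]^{m×n}, and s ∈ ℕ^m such that there exists a basis of ker(F) with nonpositive −s-row degree. Let μ ∈ ℤ_{>0} with μ > max(s), let d ∈ ℤ_{>0}^n with d ≥ cdeg_s(F) + 1 entrywise, let n̄ be the parameter of the overlapping linearization of F with respect to d and μ, and let t = (s, μ−1, …, μ−1) ∈ ℕ^{m+n̄}. Let P ∈ K[x]^{(m+n̄)×(m+n̄)} be a basis of App_{L_μ(d)}(L_{d,μ}(F)) in −t-reduced form. Then exactly k = m − rank(F) rows of P have nonpositive −t-row degree, and the matrix K ∈ K[x]^{k×m} formed by the first m columns of these rows is a basis of ker(F) in −s-reduced form. Moreover, if P is in −t-weak Popov form, then K is in −s-weak Popov form. -/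

import Mathlib

open Polynomial Matrix

/-- The degree of a polynomial, viewed in `ℤ ∪ {-∞}`. -/
noncomputable def degZ {K : Type*} [Field K] (p : K[X]) : WithBot ℤ :=
  p.degree.map fun a : ℕ => (a : ℤ)

/-- The `s`-row degree of a (row) vector of polynomials. -/
noncomputable def rdegRow {K : Type*} [Field K] {ν : Type*} [Fintype ν]
    (s : ν → ℤ) (v : ν → K[X]) : WithBot ℤ :=
  Finset.univ.sup fun j => degZ (v j) + (s j : WithBot ℤ)

/-- The `s`-row degree of a polynomial matrix. -/
noncomputable def rdeg {K : Type*} [Field K] {ι ν : Type*} [Fintype ν]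
    (s : ν → ℤ) (P : Matrix ι ν K[X]) : ι → WithBot ℤ :=
  fun i => rdegRow s (P i)

/-- The `t`-column degree of a polynomial matrix. -/
noncomputable def cdeg {K : Type*} [Field K] {ι ν : Type*} [Fintype ι]
    (t : ι → ℤ) (P : Matrix ι ν K[X]) : ν → WithBot ℤ :=
  fun j => Finset.univ.sup fun i => degZ (P i j) + (t i : WithBot ℤ)

/-- Coefficient of integer degree `d` of a polynomial (0 if `d < 0`). -/
noncomputable def coeffZ {K : Type*} [Field K] (p : K[X]) (d : ℤ) : K :=
  if 0 ≤ d then p.coeff d.toNat else 0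

/-- The `s`-leading matrix of a polynomial matrix. -/
noncomputable def lm {K : Type*} [Field K] {ι ν : Type*} [Fintype ν]
    (s : ν → ℤ) (P : Matrix ι ν K[X]) : Matrix ι ν K :=
  Matrix.of fun i j =>
    (rdeg s P i).recBotCoe 0 fun t => coeffZ (P i j) (t - s j)

/-- `P` is in `s`-reduced form: its `s`-leading matrix has full row rank,
i.e. its rows are linearly independent over `K`. -/
def IsReducedForm {K : Type*} [Field K] {ι ν : Type*} [Fintype ν]
    (s : ν → ℤ) (P : Matrix ι ν K[X]) : Prop :=
  LinearIndependent K fun i => lm s P i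

open Classical in
/-- The `s`-pivot index of a row vector: the largest column index where the
`s`-row degree is attained (with a nonzero entry); `⊥` for the zero row. -/
noncomputable def piv {K : Type*} [Field K] {ν : Type*} [Fintype ν] [LinearOrder ν]
    (s : ν → ℤ) (v : ν → K[X]) : WithBot ν :=
  (Finset.univ.filter fun j => v j ≠ 0 ∧ degZ (v j) + (s j : WithBot ℤ) = rdegRow s v).max

/-- The `s`-pivot degree of a row vector (junk value `0` for the zero row). -/
noncomputable def pivDeg {K : Type*} [Field K] {ν : Type*} [Fintype ν] [LinearOrder ν]
    (s : ν → ℤ) (v : ν → K[X]) : ℕ :=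
  ((piv s v).map fun j => (v j).natDegree).unbotD 0

/-- `P` is in `s`-weak Popov form: no zero row and strictly increasing `s`-pivot indices. -/
def IsWeakPopov {K : Type*} [Field K] {ι ν : Type*} [Fintype ν] [LinearOrder ν] [Preorder ι]
    (s : ν → ℤ) (P : Matrix ι ν K[X]) : Prop :=
  (∀ i, piv s (P i) ≠ ⊥) ∧ StrictMono fun i => piv s (P i)

/-- `P` is in `s`-unordered weak Popov form: no zero row and pairwise distinct
`s`-pivot indices. -/
def IsUWeakPopov {K : Type*} [Field K] {ι ν : Type*} [Fintype ν] [LinearOrder ν]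
    (s : ν → ℤ) (P : Matrix ι ν K[X]) : Prop :=
  (∀ i, piv s (P i) ≠ ⊥) ∧ Function.Injective fun i => piv s (P i)

/-- `P` is in `s`-Popov form: `s`-weak Popov, monic pivots, and each pivot entry
has degree strictly larger than the other entries of its column. -/
def IsPopov {K : Type*} [Field K] {ι ν : Type*} [Fintype ν] [LinearOrder ν] [Preorder ι]
    (s : ν → ℤ) (P : Matrix ι ν K[X]) : Prop :=
  IsWeakPopov s P ∧
    ∀ i (j : ν), piv s (P i) = (j : WithBot ν) →
      (P i j).Monic ∧ ∀ i', i' ≠ i → (P i' j).degree < (P i j).degree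

/-- The row space of a polynomial matrix. -/
noncomputable def rowSpace {K : Type*} [Field K] {ι ν : Type*} (P : Matrix ι ν K[X]) :
    Submodule K[X] (ν → K[X]) :=
  Submodule.span K[X] (Set.range fun i => P i)

/-- The rows of `B` form a basis of the module `M`. -/
def IsBasisOf {K : Type*} [Field K] {ι ν : Type*} (B : Matrix ι ν K[X])
    (M : Submodule K[X] (ν → K[X])) : Prop :=
  LinearIndependent K[X] (fun i => B i) ∧
    Submodule.span K[X] (Set.range fun i => B i) = M

/-- The left kernel of a polynomial matrix. -/
noncomputable def leftKernel {K : Type*} [Field K] {ι ν : Type*} [Fintype ι]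
    (F : Matrix ι ν K[X]) : Submodule K[X] (ι → K[X]) :=
  LinearMap.ker F.vecMulLinear

/-! ### Overlapping partial linearization (Definition 5.8) -/

/-- `α_i = ⌈d_i/μ − 1⌉`, i.e. the unique `a ≥ 0` with `1 ≤ d_i − aμ ≤ μ`. -/
def ovlα (μ : ℕ) {n : ℕ} (d : Fin n → ℕ) (i : Fin n) : ℕ := (d i - 1) / μ

/-- `β_i = d_i − α_i μ`, so that `1 ≤ β_i ≤ μ` when `d_i ≥ 1`. -/
def ovlβ (μ : ℕ) {n : ℕ} (d : Fin n → ℕ) (i : Fin n) : ℕ := d i - ovlα μ d i * μ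

/-- Length of the `i`-th column block of the overlapping linearization:
`α_i` if `α_i > 1`, else `1`. -/
def ovlγ (μ : ℕ) {n : ℕ} (d : Fin n → ℕ) (i : Fin n) : ℕ := max (ovlα μ d i) 1

/-- Column index set of the overlapping linearization, of cardinality `n + n̄`. -/
abbrev OvlCol (μ : ℕ) {n : ℕ} (d : Fin n → ℕ) := Lex ((i : Fin n) × Fin (ovlγ μ d i))

/-- Index set for the `n̄` extra rows of the overlapping linearization. -/
abbrev OvlRowExtra (μ : ℕ) {n : ℕ} (d : Fin n → ℕ) := Lex ((i : Fin n) × Fin (ovlα μ d i - 1))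

/-- Row index set of the overlapping linearization, of cardinality `m + n̄`. -/
abbrev OvlRow (m : ℕ) (μ : ℕ) {n : ℕ} (d : Fin n → ℕ) := Fin m ⊕ₗ OvlRowExtra μ d

/-- The `k`-th `x^μ`-adic digit of a polynomial. -/
noncomputable def ovlDigit {K : Type*} [Field K] (μ k : ℕ) (p : K[X]) : K[X] :=
  ∑ e ∈ Finset.range μ, Polynomial.C (p.coeff (k * μ + e)) * Polynomial.X ^ e

/-- The expanded order tuple `L_μ(d)`: block `i` is `(2μ,…,2μ, μ+β_i)` if
`α_i > 1`, and `(d_i)` otherwise. -/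
def ovlOrder (μ : ℕ) {n : ℕ} (d : Fin n → ℕ) (c : OvlCol μ d) : ℕ :=
  if ovlα μ d (ofLex c).1 ≤ 1 then d (ofLex c).1
  else if ((ofLex c).2 : ℕ) = ovlγ μ d (ofLex c).1 - 1 then μ + ovlβ μ d (ofLex c).1
  else 2 * μ

/-- The overlapping linearization `L_{d,μ}(F)`: top block has column blocks
`[F_i^{(0)}+F_i^{(1)}x^μ | ⋯ | F_i^{(α_i−1)}+F_i^{(α_i)}x^μ]` (or `F_{·,i}`
when `α_i ≤ 1`), bottom block is `diag(J_1,…,J_n)` with `J_i = [0 | I]`. -/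
noncomputable def ovlL (K : Type*) [Field K] (μ : ℕ) {m n : ℕ} (d : Fin n → ℕ)
    (F : Matrix (Fin m) (Fin n) K[X]) :
    Matrix (OvlRow m μ d) (OvlCol μ d) K[X] :=
  Matrix.of fun r c =>
    Sum.elim
      (fun a : Fin m =>
        if ovlα μ d (ofLex c).1 ≤ 1 then F a (ofLex c).1
        else ovlDigit μ ((ofLex c).2 : ℕ) (F a (ofLex c).1) +
          ovlDigit μ (((ofLex c).2 : ℕ) + 1) (F a (ofLex c).1) * Polynomial.X ^ μ)
      (fun b : OvlRowExtra μ d =>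
        if (ofLex b).1 = (ofLex c).1 ∧ ((ofLex c).2 : ℕ) = ((ofLex b).2 : ℕ) + 1 then 1 else 0)
      (ofLex r)

/-- The module of approximants `App_{ord}(L)`: row vectors `p` with
`p · (column c of L) ≡ 0 mod x^{ord c}` for all `c`. -/
noncomputable def appMod {K : Type*} [Field K] {ι κ : Type*} [Fintype ι]
    (ord : κ → ℕ) (L : Matrix ι κ K[X]) : Submodule K[X] (ι → K[X]) :=
  Submodule.comap L.vecMulLinear
    (Submodule.pi Set.univ fun c => Ideal.span {(Polynomial.X : K[X]) ^ ord c})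

/-!
Let `p = (u, q)` have `-t`-row degree at most `0`. The digits of `F` in base `x^μ` give the
entry `(uF)_i` as a sum `∑_j A_j x^{jμ}` in which `A_j` has degree at most `2μ - 2`. Since
consecutive columns of the overlapping linearization share a digit, comparing their congruences
modulo `x^{2μ}` and `x^μ` determines the extra entries: `q_c` is the carry
`(∑_{j<c} A_j x^{jμ}) / x^{cμ}`. The congruence of the last column then says that `x^{d_i}` divides
`(uF)_i`, which has degree less than `d_i`; so `u ∈ ker F`. Conversely the partial sums of a
vanishing sum are divisible by `x^{cμ}`, so every small `u ∈ ker F` extends by its carries.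

The same quotient bounds the degree of `q_c`: its contribution to the `-t`-row degree of `p` is
strictly below that of `u`, so the carries affect neither the row degree, nor the leading matrix,
nor the pivot. By the predictable degree property, the rows of `P` of nonpositive degree generate
all approximants of nonpositive degree, hence `ker F`.
-/

section Rank

variable {R m n : Type*} [CommRing R] [Fintype n]

theorem rank_map_algebraMap_of_isFractionRing [Finite m] (L : Type*) [Field L]
    [Algebra R L] [IsFractionRing R L] (A : Matrix m n R) :
    (A.map (algebraMap R L)).rank = A.rank := by
  let f : (m → R) →ₗ[R] (m → L) :=
    LinearMap.pi fun i => (Algebra.linearMap R L).comp (LinearMap.proj i)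
  have : IsLocalizedModule (nonZeroDivisors R) f :=
    IsLocalizedModule.pi (nonZeroDivisors R) fun _ : m => Algebra.linearMap R L
  have himage : f '' Set.range A.col = Set.range (A.map (algebraMap R L)).col :=
    (Set.range_comp f A.col).symm
  rw [rank_eq_finrank_span_cols, rank_eq_finrank_span_cols, ← himage,
    ← Submodule.localized'_span L (nonZeroDivisors R) f,
    IsLocalization.finrank_eq L (nonZeroDivisors R) le_rfl]
  exact IsLocalizedModule.finrank_eq (nonZeroDivisors R)
    ((Submodule.span R (Set.range A.col)).toLocalized' L (nonZeroDivisors R) f) le_rfl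

theorem rank_transpose_of_isDomain [Fintype m] [IsDomain R] (A : Matrix m n R) :
    Aᵀ.rank = A.rank := by
  rw [← rank_map_algebraMap_of_isFractionRing (FractionRing R),
    ← rank_map_algebraMap_of_isFractionRing (FractionRing R) A, transpose_map, rank_transpose]

end Rank

section Basis

variable {K : Type*} [Field K] {ι ν : Type*}

theorem finrank_leftKernel [Fintype ι] [Fintype ν] (F : Matrix ι ν K[X]) :
    Module.finrank K[X] (leftKernel F) = Fintype.card ι - F.rank := by
  have hrank : Module.finrank K[X] ((ι → K[X]) ⧸ leftKernel F) = F.rank := by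
    rw [leftKernel, F.vecMulLinear.quotKerEquivRange.finrank_eq, ← rank_transpose_of_isDomain,
      Matrix.rank, mulVecLin_transpose]
  have hnullity := (leftKernel F).finrank_quotient_add_finrank
  rw [hrank, Module.finrank_fintype_fun_eq_card] at hnullity
  exact Nat.eq_sub_of_add_eq' hnullity

theorem IsBasisOf.natCard_eq_finrank {B : Matrix ι ν K[X]} {M : Submodule K[X] (ν → K[X])}
    (hB : IsBasisOf B M) : Nat.card ι = Module.finrank K[X] M := by
  rw [← hB.2]
  exact (Module.finrank_eq_nat_card_basis (Module.Basis.span hB.1)).symm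

theorem IsBasisOf.row_mem {B : Matrix ι ν K[X]} {M : Submodule K[X] (ν → K[X])}
    (hB : IsBasisOf B M) (i : ι) : B i ∈ M :=
  hB.2 ▸ Submodule.subset_span ⟨i, rfl⟩

end Basis

section Degree

variable {K : Type*} [Field K]

/-- The polynomials of degree at most the integer `a`; this is `{0}` when `a < 0`. -/
def degLE (K : Type*) [Field K] (a : ℤ) : Submodule K K[X] where
  carrier := {p | ∀ k : ℕ, a < k → p.coeff k = 0}
  zero_mem' := fun _ _ => coeff_zero _
  add_mem' := fun hp hq k hk => by rw [coeff_add, hp k hk, hq k hk, add_zero]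
  smul_mem' := fun c p hp k hk => by rw [coeff_smul, hp k hk, smul_zero]

variable {p q : K[X]} {a b : ℤ}

theorem degZ_of_ne_zero (hp : p ≠ 0) : degZ p = ((p.natDegree : ℤ) : WithBot ℤ) := by
  rw [degZ, degree_eq_natDegree hp]
  rfl

theorem degZ_zero : degZ (0 : K[X]) = ⊥ := by
  rw [degZ, degree_zero, WithBot.map_bot]

theorem mem_degLE_iff : p ∈ degLE K a ↔ degZ p ≤ (a : WithBot ℤ) := by
  rcases eq_or_ne p 0 with rfl | hp
  · simp only [zero_mem, degZ_zero, bot_le]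
  rw [degZ_of_ne_zero hp, WithBot.coe_le_coe]
  refine ⟨fun h => ?_, fun h k hk => coeff_eq_zero_of_natDegree_lt (by omega)⟩
  by_contra! hlt
  exact hp (leadingCoeff_eq_zero.1 (h p.natDegree hlt))

theorem mem_degLE_sub_iff : p ∈ degLE K (b - a) ↔ degZ p + (a : WithBot ℤ) ≤ b := by
  rw [mem_degLE_iff]
  cases degZ p with
  | bot => simp only [bot_le, WithBot.bot_add]
  | coe x => norm_cast; exact le_sub_iff_add_le

theorem degLE_mono (hab : a ≤ b) : degLE K a ≤ degLE K b :=
  fun _ hp k hk => hp k (hab.trans_lt hk)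

theorem mul_mem_degLE (hp : p ∈ degLE K a) (hq : q ∈ degLE K b) : p * q ∈ degLE K (a + b) := by
  intro k hk
  rw [coeff_mul]
  refine Finset.sum_eq_zero fun x hx => ?_
  rw [Finset.HasAntidiagonal.mem_antidiagonal] at hx
  by_cases hx₁ : a < x.1
  · rw [hp _ hx₁, zero_mul]
  · rw [hq _ (by omega), mul_zero]

theorem mul_X_pow_mem_degLE_iff {e : ℕ} : p * X ^ e ∈ degLE K (a + e) ↔ p ∈ degLE K a := by
  refine ⟨fun h k hk => ?_, fun h => mul_mem_degLE h fun k hk => ?_⟩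
  · have := h (k + e) (by push_cast; omega)
    rwa [coeff_mul_X_pow] at this
  · rw [coeff_X_pow, if_neg (by omega)]

theorem eq_zero_of_X_pow_dvd {e : ℕ} (hp : p ∈ degLE K (e - 1)) (hdvd : X ^ e ∣ p) : p = 0 := by
  ext k
  rcases lt_or_ge k e with hk | hk
  · rw [X_pow_dvd_iff.1 hdvd k hk, coeff_zero]
  · rw [hp k (by omega), coeff_zero]

theorem degLE_eq_bot_of_neg (ha : a < 0) : degLE K a = ⊥ :=
  (Submodule.eq_bot_iff _).2 fun _ hp =>
    eq_zero_of_X_pow_dvd (e := 0) (degLE_mono (by omega) hp) (one_dvd _)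

theorem coeffZ_eq_zero_of_neg (p : K[X]) (ha : a < 0) : coeffZ p a = 0 :=
  if_neg ha.not_ge

theorem coeffZ_natCast (p : K[X]) (k : ℕ) : coeffZ p k = p.coeff k :=
  if_pos (Int.natCast_nonneg k)

theorem coeffZ_zero (a : ℤ) : coeffZ (0 : K[X]) a = 0 := by
  simp only [coeffZ, coeff_zero, ite_self]

theorem coeffZ_sum {ι : Type*} (S : Finset ι) (f : ι → K[X]) (a : ℤ) :
    coeffZ (∑ i ∈ S, f i) a = ∑ i ∈ S, coeffZ (f i) a := by
  unfold coeffZ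
  split_ifs
  · exact finsetSum_coeff S f _
  · exact Finset.sum_const_zero.symm

theorem coeffZ_sub_eq_zero (h : degZ p + (a : WithBot ℤ) < b) : coeffZ p (b - a) = 0 := by
  rcases lt_or_ge (b - a) 0 with hneg | hnonneg
  · exact coeffZ_eq_zero_of_neg p hneg
  obtain ⟨k, hk⟩ := Int.eq_ofNat_of_zero_le hnonneg
  rw [hk, coeffZ_natCast]
  by_contra hcoeff
  have hp : p ≠ 0 := by rintro rfl; exact hcoeff (coeff_zero k)
  have hle := le_natDegree_of_ne_zero hcoeff
  rw [degZ_of_ne_zero hp] at h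
  norm_cast at h
  omega

theorem coeffZ_mul (hp : p ∈ degLE K a) (hq : q ∈ degLE K b) :
    coeffZ (p * q) (a + b) = coeffZ p a * coeffZ q b := by
  rcases lt_or_ge a 0 with ha | ha
  · rw [degLE_eq_bot_of_neg ha, Submodule.mem_bot] at hp
    rw [hp, zero_mul, coeffZ_zero, coeffZ_zero, zero_mul]
  rcases lt_or_ge b 0 with hb | hb
  · rw [degLE_eq_bot_of_neg hb, Submodule.mem_bot] at hq
    rw [hq, mul_zero, coeffZ_zero, coeffZ_zero, mul_zero]
  lift a to ℕ using ha
  lift b to ℕ using hb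
  rw [← Nat.cast_add, coeffZ_natCast, coeffZ_natCast, coeffZ_natCast]
  exact coeff_mul_add_eq_of_natDegree_le
    (natDegree_le_iff_coeff_eq_zero.2 fun k hk => hp k (by omega))
    (natDegree_le_iff_coeff_eq_zero.2 fun k hk => hq k (by omega))

end Degree

section RowDegree

variable {K : Type*} [Field K] {ι κ ν : Type*}

theorem le_cdeg [Fintype ι] (t : ι → ℤ) (P : Matrix ι ν K[X]) (i : ι) (j : ν) :
    degZ (P i j) + (t i : WithBot ℤ) ≤ cdeg t P j :=
  Finset.le_sup (f := fun i => degZ (P i j) + (t i : WithBot ℤ)) (Finset.mem_univ i)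

theorem mem_degLE_of_cdeg_add_one_le [Fintype ι] {t : ι → ℤ} {P : Matrix ι ν K[X]} {j : ν} {b : ℤ}
    (h : cdeg t P j + 1 ≤ b) (i : ι) : P i j ∈ degLE K (b - 1 - t i) := by
  rw [sub_sub, add_comm, mem_degLE_sub_iff]
  calc degZ (P i j) + ((t i + 1 : ℤ) : WithBot ℤ)
      = degZ (P i j) + t i + 1 := by push_cast; rw [add_assoc]
    _ ≤ cdeg t P j + 1 := add_le_add_left (le_cdeg t P i j) 1
    _ ≤ b := h

variable [Fintype ν] {s : ν → ℤ} {P : Matrix ι ν K[X]}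

theorem le_rdegRow (s : ν → ℤ) (v : ν → K[X]) (j : ν) :
    degZ (v j) + (s j : WithBot ℤ) ≤ rdegRow s v :=
  Finset.le_sup (f := fun j => degZ (v j) + (s j : WithBot ℤ)) (Finset.mem_univ j)

theorem rdegRow_le_iff {v : ν → K[X]} {N : ℤ} :
    rdegRow s v ≤ (N : WithBot ℤ) ↔ ∀ j, v j ∈ degLE K (N - s j) := by
  simp only [rdegRow, Finset.sup_le_iff, Finset.mem_univ, true_imp_iff, mem_degLE_sub_iff]

theorem rdegRow_neg_le_iff {v : ν → K[X]} {N : ℤ} :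
    rdegRow (fun j => -s j) v ≤ (N : WithBot ℤ) ↔ ∀ j, v j ∈ degLE K (s j + N) := by
  simp only [rdegRow_le_iff, sub_neg_eq_add, add_comm]

theorem rdegRow_zero (s : ν → ℤ) : rdegRow s (0 : ν → K[X]) = ⊥ := by
  simp only [rdegRow, Pi.zero_apply, degZ_zero, WithBot.bot_add, Finset.sup_bot]

theorem rdegRow_comp_le [Fintype κ] (s : ν → ℤ) (v : ν → K[X]) (f : κ → ν) :
    rdegRow (s ∘ f) (v ∘ f) ≤ rdegRow s v :=
  Finset.sup_le fun k _ => le_rdegRow s v (f k)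

theorem lm_apply {ρ : ℤ} {i : ι} (hρ : rdeg s P i = ρ) (j : ν) :
    lm s P i j = coeffZ (P i j) (ρ - s j) := by
  rw [lm, of_apply, hρ, WithBot.recBotCoe_coe]

theorem IsReducedForm.exists_rdeg_eq (hP : IsReducedForm s P) (i : ι) :
    ∃ ρ : ℤ, rdeg s P i = ρ := by
  refine (WithBot.ne_bot_iff_exists.1 fun hbot => hP.ne_zero i ?_).imp fun _ => Eq.symm
  ext j
  rw [lm, of_apply, hbot, WithBot.recBotCoe_bot, Pi.zero_apply]

theorem IsReducedForm.submatrix_row (hP : IsReducedForm s P) {f : κ → ι}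
    (hf : Function.Injective f) : IsReducedForm s (P.submatrix f id) :=
  hP.comp f hf

theorem IsWeakPopov.submatrix_row [LinearOrder ν] [Preorder ι] [Preorder κ]
    (hP : IsWeakPopov s P) {f : κ → ι} (hf : StrictMono f) : IsWeakPopov s (P.submatrix f id) :=
  ⟨fun k => hP.1 (f k), hP.2.comp hf⟩

theorem coeffZ_vecMul [Fintype ι] {ρ : ι → ℤ} (hρ : ∀ i, rdeg s P i = ρ i) {c : ι → K[X]} {N : ℤ}
    (hc : ∀ i, c i ∈ degLE K (N - ρ i)) (j : ν) :
    coeffZ ((c ᵥ* P) j) (N - s j) = ((fun i => coeffZ (c i) (N - ρ i)) ᵥ* lm s P) j := by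
  rw [vecMul, dotProduct, coeffZ_sum, vecMul, dotProduct]
  refine Finset.sum_congr rfl fun i _ => ?_
  have hPij : P i j ∈ degLE K (ρ i - s j) := rdegRow_le_iff.1 (hρ i).le j
  rw [lm_apply (hρ i), ← coeffZ_mul (hc i) hPij, sub_add_sub_cancel]

-- The predictable degree property: the leading coefficients of `c` combine the rows of `lm s P`,
-- so they cannot cancel.
theorem IsReducedForm.degZ_add_rdeg_le [Fintype ι] (hP : IsReducedForm s P) (c : ι → K[X])
    (i : ι) :
    degZ (c i) + rdeg s P i ≤ rdegRow s (c ᵥ* P) := by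
  choose ρ hρ using hP.exists_rdeg_eq
  have : Nonempty ι := ⟨i⟩
  obtain ⟨i₀, hmax⟩ := Finite.exists_max fun i => degZ (c i) + rdeg s P i
  refine (hmax i).trans (le_of_not_gt fun hlt => ?_)
  have hc₀ : c i₀ ≠ 0 := by
    intro h
    rw [h, degZ_zero, WithBot.bot_add] at hlt
    exact not_lt_bot hlt
  simp only [hρ, degZ_of_ne_zero hc₀, ← WithBot.coe_add] at hmax hlt
  set N : ℤ := (c i₀).natDegree + ρ i₀
  have hrelation : (fun i => coeffZ (c i) (N - ρ i)) ᵥ* lm s P = 0 := by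
    ext j
    rw [← coeffZ_vecMul hρ (fun i => mem_degLE_sub_iff.2 (hmax i))]
    exact coeffZ_sub_eq_zero ((le_rdegRow s _ j).trans_lt hlt)
  rw [vecMul_eq_sum] at hrelation
  have hlead := Fintype.linearIndependent_iff.1 hP _ hrelation i₀
  rw [show N - ρ i₀ = (c i₀).natDegree from add_sub_cancel_right _ _, coeffZ_natCast] at hlead
  exact hc₀ (leadingCoeff_eq_zero.1 hlead)

variable [Finite ι]

theorem IsReducedForm.linearIndependent (hP : IsReducedForm s P) :
    LinearIndependent K[X] fun i => P i := by
  have := Fintype.ofFinite ι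
  refine Fintype.linearIndependent_iff.2 fun c hc i => ?_
  obtain ⟨ρ, hρ⟩ := hP.exists_rdeg_eq i
  have hdeg := hP.degZ_add_rdeg_le c i
  rw [vecMul_eq_sum, show ∑ i, c i • P i = 0 from hc, rdegRow_zero, le_bot_iff, hρ] at hdeg
  by_contra hci
  rw [degZ_of_ne_zero hci] at hdeg
  exact WithBot.coe_ne_bot hdeg

variable {M : Submodule K[X] (ν → K[X])} {δ : WithBot ℤ}

theorem IsReducedForm.mem_span_of_rdegRow_le (hP : IsReducedForm s P) {v : ν → K[X]}
    (hv : v ∈ Submodule.span K[X] (Set.range fun i => P i)) (hδ : rdegRow s v ≤ δ) :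
    v ∈ Submodule.span K[X] (Set.range fun i : {i // rdeg s P i ≤ δ} => P i) := by
  have := Fintype.ofFinite ι
  obtain ⟨c, rfl⟩ := (Submodule.mem_span_range_iff_exists_fun _).1 hv
  refine Submodule.sum_mem _ fun i _ => ?_
  rcases eq_or_ne (c i) 0 with hci | hci
  · rw [hci, zero_smul]
    exact zero_mem _
  have hi : rdeg s P i ≤ δ :=
    calc rdeg s P i ≤ degZ (c i) + rdeg s P i := by
          refine le_add_of_nonneg_left ?_
          rw [degZ_of_ne_zero hci]
          exact_mod_cast Nat.zero_le _
      _ ≤ rdegRow s (c ᵥ* P) := hP.degZ_add_rdeg_le c i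
      _ ≤ δ := by rwa [vecMul_eq_sum]
  exact Submodule.smul_mem _ _ (Submodule.subset_span ⟨⟨i, hi⟩, rfl⟩)

theorem IsReducedForm.span_submatrix_rdeg_le (hP : IsReducedForm s P)
    (hspan : Submodule.span K[X] (Set.range fun i => P i) = M) {f : κ → ν}
    {N : Submodule K[X] (κ → K[X])} (hMN : ∀ v ∈ M, rdegRow s v ≤ δ → v ∘ f ∈ N)
    (hNM : N ≤ Submodule.span K[X] {u | ∃ v ∈ M, rdegRow s v ≤ δ ∧ v ∘ f = u}) :
    Submodule.span K[X] (Set.range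
      (P.submatrix (Subtype.val : {i // rdeg s P i ≤ δ} → ι) f).row) = N := by
  have hrange : Set.range (P.submatrix (Subtype.val : {i // rdeg s P i ≤ δ} → ι) f).row =
      LinearMap.funLeft K[X] K[X] f '' Set.range fun i : {i // rdeg s P i ≤ δ} => P i :=
    Set.range_comp (LinearMap.funLeft K[X] K[X] f) fun i : {i // rdeg s P i ≤ δ} => P i
  refine le_antisymm (Submodule.span_le.2 ?_) (hNM.trans (Submodule.span_le.2 ?_))
  · rintro _ ⟨i, rfl⟩
    exact hMN (P i) (hspan ▸ Submodule.subset_span ⟨i, rfl⟩) i.2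
  · rintro _ ⟨v, hv, hδ, rfl⟩
    rw [hrange, ← Submodule.map_span]
    exact Submodule.mem_map_of_mem (hP.mem_span_of_rdegRow_le (hspan ▸ hv) hδ)

end RowDegree

theorem max_image_of_monotone {α β : Type*} [LinearOrder α] [LinearOrder β] {f : α → β}
    (hf : Monotone f) (S : Finset α) : (S.image f).max = S.max.map f := by
  rw [Finset.max, Finset.sup_image]
  exact (Finset.apply_sup_eq_sup_comp_of_linearOrder (f := WithBot.some) _ hf.withBot_map rfl).symm

section LeftBlock

variable {K : Type*} [Field K] {α β ι : Type*} [Fintype α]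

/-- The `s`-row degree of `v` is attained only at columns of the left block `α`. -/
def IsLeftDominant (s : α ⊕ₗ β → ℤ) (v : α ⊕ₗ β → K[X]) : Prop :=
  ∀ b, v (Sum.inrₗ b) ≠ 0 →
    degZ (v (Sum.inrₗ b)) + (s (Sum.inrₗ b) : WithBot ℤ) <
      rdegRow (s ∘ Sum.inlₗ) (v ∘ Sum.inlₗ)

variable {s : α ⊕ₗ β → ℤ} {v : α ⊕ₗ β → K[X]} {P : Matrix ι (α ⊕ₗ β) K[X]}

theorem isLeftDominant_of_forall_mem_degLE
    (h : ∀ e : ℤ, rdegRow (s ∘ Sum.inlₗ) (v ∘ Sum.inlₗ) ≤ e →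
      ∀ b, v (Sum.inrₗ b) ∈ degLE K (e - 1 - s (Sum.inrₗ b))) : IsLeftDominant s v := by
  intro b hb
  by_contra! hle
  rw [degZ_of_ne_zero hb, ← WithBot.coe_add] at hle
  have hmem := h _ hle b
  rw [mem_degLE_iff, degZ_of_ne_zero hb, WithBot.coe_le_coe] at hmem
  omega

variable [Fintype β]

theorem IsLeftDominant.rdegRow_eq (hv : IsLeftDominant s v) :
    rdegRow s v = rdegRow (s ∘ Sum.inlₗ) (v ∘ Sum.inlₗ) := by
  refine le_antisymm (Finset.sup_le fun c _ => ?_) (rdegRow_comp_le s v Sum.inlₗ)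
  match c with
  | Sum.inlₗ a => exact le_rdegRow (s ∘ Sum.inlₗ) (v ∘ Sum.inlₗ) a
  | Sum.inrₗ b =>
    by_cases hb : v (Sum.inrₗ b) = 0
    · rw [hb, degZ_zero, WithBot.bot_add]
      exact bot_le
    · exact (hv b hb).le

theorem IsLeftDominant.piv_eq [LinearOrder α] [LinearOrder β] (hv : IsLeftDominant s v) :
    piv s v = (piv (s ∘ Sum.inlₗ) (v ∘ Sum.inlₗ)).map Sum.inlₗ := by
  classical
  rw [piv, piv, ← max_image_of_monotone Sum.Lex.inl_mono]
  congr 1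
  ext c
  simp only [Finset.mem_filter, Finset.mem_univ, true_and, Finset.mem_image, hv.rdegRow_eq,
    Function.comp_apply]
  match c with
  | Sum.inlₗ a =>
    exact ⟨fun h => ⟨a, h, rfl⟩, fun ⟨a', h, heq⟩ => by rwa [← heq]⟩
  | Sum.inrₗ b =>
    exact ⟨fun h => absurd h.2 (hv b h.1).ne, fun ⟨_, _, heq⟩ => nomatch heq⟩

theorem IsReducedForm.submatrix_inlₗ (hP : IsReducedForm s P)
    (hdom : ∀ i, IsLeftDominant s (P i)) :
    IsReducedForm (s ∘ Sum.inlₗ) (P.submatrix id Sum.inlₗ) := by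
  have hinj : Function.Injective (Sum.inlₗ : α → α ⊕ₗ β) := toLex.injective.comp Sum.inl_injective
  refine LinearIndependent.of_comp (Function.ExtendByZero.linearMap K (Sum.inlₗ : α → α ⊕ₗ β)) ?_
  suffices hlm : ∀ i, Function.ExtendByZero.linearMap K (Sum.inlₗ : α → α ⊕ₗ β)
      (lm (s ∘ Sum.inlₗ) (P.submatrix id Sum.inlₗ) i) = lm s P i by
    rwa [IsReducedForm, ← funext hlm] at hP
  intro i
  obtain ⟨ρ, hρ⟩ := hP.exists_rdeg_eq i
  have hρ' : rdeg (s ∘ Sum.inlₗ) (P.submatrix id Sum.inlₗ) i = ρ :=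
    (hdom i).rdegRow_eq.symm.trans hρ
  ext c
  match c with
  | Sum.inlₗ a =>
    exact (hinj.extend_apply _ _ a).trans ((lm_apply hρ' a).trans (lm_apply hρ (Sum.inlₗ a)).symm)
  | Sum.inrₗ b =>
    have hzero : lm s P i (Sum.inrₗ b) = 0 := by
      rw [lm_apply hρ]
      by_cases hb : P i (Sum.inrₗ b) = 0
      · rw [hb, coeffZ_zero]
      · exact coeffZ_sub_eq_zero ((hdom i b hb).trans_eq hρ')
    exact (Function.extend_apply' _ _ _ fun ⟨_, h⟩ => nomatch h).trans hzero.symm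

theorem IsWeakPopov.submatrix_inlₗ [LinearOrder α] [LinearOrder β] [Preorder ι]
    (hP : IsWeakPopov s P) (hdom : ∀ i, IsLeftDominant s (P i)) :
    IsWeakPopov (s ∘ Sum.inlₗ) (P.submatrix id Sum.inlₗ) := by
  refine ⟨fun i hi => hP.1 i ?_, fun i j hij => ?_⟩
  · rw [(hdom i).piv_eq]
    exact congrArg (WithBot.map Sum.inlₗ) hi
  · have hlt : piv s (P i) < piv s (P j) := hP.2 hij
    rw [(hdom i).piv_eq, (hdom j).piv_eq] at hlt
    exact Sum.Lex.inl_mono.withBot_map.reflect_lt hlt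

end LeftBlock

section XAdicSum

variable {K : Type*} [Field K] {μ : ℕ} {A q : ℕ → K[X]}

/-- The partial sum `∑_{j < c} A_j x^{jμ}`. The coefficients `A_j` may have degree `μ` or more, so
that it need not be a truncated `x^μ`-adic expansion. -/
noncomputable def xAdicSum (μ : ℕ) (A : ℕ → K[X]) (c : ℕ) : K[X] :=
  ∑ j ∈ Finset.range c, A j * X ^ (j * μ)

theorem xAdicSum_zero (μ : ℕ) (A : ℕ → K[X]) : xAdicSum μ A 0 = 0 :=
  Finset.sum_range_zero _

theorem xAdicSum_succ (μ : ℕ) (A : ℕ → K[X]) (c : ℕ) :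
    xAdicSum μ A (c + 1) = xAdicSum μ A c + A c * X ^ (c * μ) :=
  Finset.sum_range_succ _ c

theorem xAdicSum_add_two {p : K[X]} {c : ℕ} (hp : p * X ^ (c * μ) = xAdicSum μ A c) :
    xAdicSum μ A (c + 2) = X ^ (c * μ) * (A c + A (c + 1) * X ^ μ + p) := by
  rw [xAdicSum_succ, xAdicSum_succ, ← hp]
  ring

theorem xAdicSum_mem_degLE {e : ℤ} (hA : ∀ j, A j ∈ degLE K (e + μ)) (c : ℕ) :
    xAdicSum μ A c ∈ degLE K (e + (c * μ : ℕ)) := by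
  induction c with
  | zero =>
    rw [xAdicSum_zero]
    exact zero_mem _
  | succ c ih =>
    have hexp : e + ((c + 1) * μ : ℕ) = e + μ + (c * μ : ℕ) := by push_cast; ring
    rw [xAdicSum_succ, hexp]
    exact add_mem (degLE_mono (by omega) ih) (mul_X_pow_mem_degLE_iff.2 (hA c))

theorem mem_degLE_of_mul_X_pow_eq_xAdicSum {e : ℤ} (hA : ∀ j, A j ∈ degLE K (e + μ)) {p : K[X]}
    {c : ℕ} (hp : p * X ^ (c * μ) = xAdicSum μ A c) : p ∈ degLE K e :=
  mul_X_pow_mem_degLE_iff.1 (hp ▸ xAdicSum_mem_degLE hA c)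

theorem X_pow_dvd_xAdicSum_of_eq_zero {N c : ℕ} (hN : xAdicSum μ A N = 0) (hc : c ≤ N) :
    X ^ (c * μ) ∣ xAdicSum μ A c := by
  have hsplit := Finset.sum_range_add_sum_Ico (fun j => A j * X ^ (j * μ)) hc
  rw [show ∑ j ∈ Finset.range N, A j * X ^ (j * μ) = 0 from hN] at hsplit
  rw [xAdicSum, eq_neg_of_add_eq_zero_left hsplit, dvd_neg]
  exact Finset.dvd_sum fun j hj =>
    (pow_dvd_pow X (Nat.mul_le_mul_right μ (Finset.mem_Ico.1 hj).1)).mul_left (A j)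

/-- The approximation conditions `A_c + A_{c+1} x^μ + q_c ≡ 0` on the `α` overlapping columns of
a block, modulo `x^{μ+β}` for the last column and modulo `x^{2μ}` for the others. -/
def IsOverlapApprox (μ α β : ℕ) (A q : ℕ → K[X]) : Prop :=
  ∀ c < α, X ^ (if c + 1 = α then μ + β else 2 * μ) ∣ A c + A (c + 1) * X ^ μ + q c

theorem mul_X_pow_eq_add_of_dvd {a₀ a₁ q₀ q₁ : K[X]}
    (h₀ : X ^ (2 * μ) ∣ a₀ + a₁ * X ^ μ + q₀) (h₁ : X ^ μ ∣ a₁ + q₁)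
    (hdeg₀ : q₀ + a₀ ∈ degLE K (2 * μ - 1)) (hdeg₁ : q₁ ∈ degLE K (μ - 1)) :
    q₁ * X ^ μ = q₀ + a₀ := by
  have hdvd : X ^ (2 * μ) ∣ q₁ * X ^ μ - (q₀ + a₀) := by
    have h₁' : X ^ (2 * μ) ∣ (a₁ + q₁) * X ^ μ := by
      rw [two_mul, pow_add]
      exact mul_dvd_mul_right h₁ _
    convert dvd_sub h₁' h₀ using 1
    ring
  have hdeg : q₁ * X ^ μ ∈ degLE K (2 * μ - 1) := by
    convert mul_X_pow_mem_degLE_iff.2 hdeg₁ using 2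
    ring
  exact sub_eq_zero.1 (eq_zero_of_X_pow_dvd (sub_mem hdeg hdeg₀) hdvd)

namespace IsOverlapApprox

variable {α β : ℕ}

theorem mul_X_pow_eq_xAdicSum (h : IsOverlapApprox μ α β A q) (hq₀ : q 0 = 0)
    (hA : ∀ c, A c ∈ degLE K (2 * μ - 1)) (hq : ∀ c, q c ∈ degLE K (μ - 1)) {c : ℕ} (hc : c < α) :
    q c * X ^ (c * μ) = xAdicSum μ A c := by
  induction c with
  | zero => rw [hq₀, zero_mul, xAdicSum_zero]
  | succ c ih =>
    have hthis : X ^ (2 * μ) ∣ A c + A (c + 1) * X ^ μ + q c := by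
      simpa only [if_neg hc.ne] using h c (by omega)
    have hnext : X ^ μ ∣ A (c + 1) + q (c + 1) := by
      have hdvd := (pow_dvd_pow X (show μ ≤ _ by split_ifs <;> omega)).trans (h (c + 1) hc)
      rwa [add_right_comm, dvd_add_left (Dvd.intro_left _ rfl)] at hdvd
    have hstep := mul_X_pow_eq_add_of_dvd hthis hnext
      (add_mem (degLE_mono (by omega) (hq c)) (hA c)) (hq (c + 1))
    rw [xAdicSum_succ, ← ih (by omega), ← add_mul, ← hstep]
    ring

theorem X_pow_dvd_xAdicSum (h : IsOverlapApprox μ α β A q) (hα : 0 < α) (hq₀ : q 0 = 0)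
    (hA : ∀ c, A c ∈ degLE K (2 * μ - 1)) (hq : ∀ c, q c ∈ degLE K (μ - 1)) :
    X ^ (α * μ + β) ∣ xAdicSum μ A (α + 1) := by
  obtain ⟨c, rfl⟩ := Nat.exists_eq_add_of_le' hα
  have hlast : X ^ (μ + β) ∣ A c + A (c + 1) * X ^ μ + q c := by
    simpa only [if_true] using h c (by omega)
  rw [xAdicSum_add_two (h.mul_X_pow_eq_xAdicSum hq₀ hA hq c.lt_succ_self),
    show (c + 1) * μ + β = c * μ + (μ + β) by ring, pow_add]
  exact mul_dvd_mul_left _ hlast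

theorem exists_of_xAdicSum_eq_zero (hβ : β ≤ μ) (h : xAdicSum μ A (α + 1) = 0) :
    ∃ q, IsOverlapApprox μ α β A q ∧ ∀ c < α, q c * X ^ (c * μ) = xAdicSum μ A c := by
  have hquot : ∀ c, ∃ p, c < α → p * X ^ (c * μ) = xAdicSum μ A c := fun c => by
    by_cases hc : c < α
    · obtain ⟨p, hp⟩ := X_pow_dvd_xAdicSum_of_eq_zero h (hc.le.trans α.le_succ)
      exact ⟨p, fun _ => by rw [hp, mul_comm]⟩
    · exact ⟨0, fun h => absurd h hc⟩
  choose q hq using hquot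
  refine ⟨q, fun c hc => ?_, hq⟩
  have hdvd : X ^ ((c + 2) * μ) ∣ _ := X_pow_dvd_xAdicSum_of_eq_zero h (Nat.succ_le_succ hc)
  rw [xAdicSum_add_two (hq c hc), show (c + 2) * μ = c * μ + 2 * μ by ring, pow_add,
    mul_dvd_mul_iff_left (pow_ne_zero _ X_ne_zero)] at hdvd
  exact (pow_dvd_pow X (by split_ifs <;> omega)).trans hdvd

theorem congr {q' : ℕ → K[X]} (h : IsOverlapApprox μ α β A q) (hq : ∀ c < α, q c = q' c) :
    IsOverlapApprox μ α β A q' :=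
  fun c hc => hq c hc ▸ h c hc

end IsOverlapApprox

end XAdicSum

section Digits

variable {K : Type*} [Field K] {ι ν : Type*} [Fintype ι]

theorem coeff_ovlDigit (μ k : ℕ) (p : K[X]) (e : ℕ) :
    (ovlDigit μ k p).coeff e = if e < μ then p.coeff (k * μ + e) else 0 := by
  simp only [ovlDigit, finsetSum_coeff, coeff_C_mul, coeff_X_pow, mul_ite, mul_one, mul_zero,
    Finset.sum_ite_eq, Finset.mem_range]

theorem ovlDigit_mem_degLE (μ k : ℕ) (p : K[X]) : ovlDigit μ k p ∈ degLE K (μ - 1) := fun e he => by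
  rw [coeff_ovlDigit, if_neg (by omega)]

theorem coeff_xAdicSum_ovlDigit (μ : ℕ) (p : K[X]) (N k : ℕ) :
    (xAdicSum μ (fun c => ovlDigit μ c p) N).coeff k = if k < N * μ then p.coeff k else 0 := by
  induction N with
  | zero => rw [xAdicSum_zero, coeff_zero, zero_mul, if_neg k.not_lt_zero]
  | succ N ih =>
    rw [xAdicSum_succ, coeff_add, ih, coeff_mul_X_pow', coeff_ovlDigit, add_mul, one_mul]
    rcases lt_or_ge k (N * μ) with hk | hk
    · rw [if_pos hk, if_neg hk.not_ge, add_zero, if_pos (by omega)]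
    · rw [if_neg hk.not_gt, zero_add, if_pos hk, Nat.add_sub_of_le hk]
      exact if_congr (by omega) rfl rfl

theorem xAdicSum_ovlDigit {μ N : ℕ} {p : K[X]} (hp : p ∈ degLE K ((N * μ : ℕ) - 1)) :
    xAdicSum μ (fun c => ovlDigit μ c p) N = p := by
  ext k
  rw [coeff_xAdicSum_ovlDigit]
  split_ifs with hk
  · rfl
  · exact (hp k (by omega)).symm

/-- The `i`-th entry of `u F^{(c)}`, where `F^{(c)}` is the `c`-th `x^μ`-adic digit of `F`. -/
noncomputable def digitProd (μ : ℕ) (F : Matrix ι ν K[X]) (u : ι → K[X]) (i : ν) (c : ℕ) : K[X] :=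
  (u ᵥ* F.map (ovlDigit μ c)) i

variable {μ : ℕ} {F : Matrix ι ν K[X]} {u : ι → K[X]} {i : ν}

theorem vecMul_mem_degLE {s : ι → ℤ} {a b : ℤ} (hu : ∀ k, u k ∈ degLE K (s k + a))
    (hF : ∀ k, F k i ∈ degLE K (b - s k)) : (u ᵥ* F) i ∈ degLE K (a + b) :=
  sum_mem fun k _ => degLE_mono (by omega) (mul_mem_degLE (hu k) (hF k))

theorem digitProd_mem_degLE {s : ι → ℕ} {e : ℤ} (hs : ∀ k, s k < μ)
    (hu : ∀ k, u k ∈ degLE K (s k + e)) (c : ℕ) :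
    digitProd μ F u i c ∈ degLE K (e + μ - 2 + μ) := by
  have hdigit : ∀ k, ovlDigit μ c (F k i) ∈ degLE K (2 * μ - 2 - s k) := fun k =>
    degLE_mono (by have := hs k; omega) (ovlDigit_mem_degLE μ c (F k i))
  exact degLE_mono (by omega) (vecMul_mem_degLE hu hdigit)

theorem xAdicSum_digitProd {N : ℕ} (hF : ∀ k, F k i ∈ degLE K ((N * μ : ℕ) - 1)) :
    xAdicSum μ (digitProd μ F u i) N = (u ᵥ* F) i := by
  calc xAdicSum μ (digitProd μ F u i) N
      = ∑ k, u k * xAdicSum μ (fun c => ovlDigit μ c (F k i)) N := by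
        simp only [xAdicSum, digitProd, vecMul, dotProduct, map_apply, Finset.sum_mul,
          Finset.mul_sum, mul_assoc]
        exact Finset.sum_comm
    _ = (u ᵥ* F) i := Finset.sum_congr rfl fun k _ => by rw [xAdicSum_ovlDigit (hF k)]

end Digits

section OverlappingLinearization

variable {K : Type*} [Field K] {m n μ : ℕ} {d : Fin n → ℕ} {F : Matrix (Fin m) (Fin n) K[X]}
  {s : Fin m → ℕ} {p : OvlRow m μ d → K[X]}

theorem ovlα_mul_add_ovlβ (μ : ℕ) (d : Fin n → ℕ) (i : Fin n) :
    ovlα μ d i * μ + ovlβ μ d i = d i :=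
  Nat.add_sub_of_le ((Nat.div_mul_le_self _ μ).trans (Nat.sub_le _ 1))

theorem ovlβ_le (hμ : 0 < μ) (d : Fin n → ℕ) (i : Fin n) : ovlβ μ d i ≤ μ := by
  have hlt : d i - 1 < ovlα μ d i * μ + μ := Nat.lt_div_mul_add hμ
  rw [ovlβ]
  omega

/-- The entry of `p` in the extra row whose `1` lies in column `c` of block `i`, and `0` for the
columns without such a row, in particular for the first one. -/
noncomputable def carry (p : OvlRow m μ d → K[X]) (i : Fin n) : ℕ → K[X]
  | 0 => 0
  | c + 1 => if h : c < ovlα μ d i - 1 then p (Sum.inrₗ (toLex ⟨i, c, h⟩)) else 0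

theorem carry_eq (p : OvlRow m μ d → K[X]) (b : OvlRowExtra μ d) :
    carry p (ofLex b).1 ((ofLex b).2 + 1) = p (Sum.inrₗ b) :=
  dif_pos (ofLex b).2.2

theorem carry_mem {V : Submodule K K[X]} (hp : ∀ b, p (Sum.inrₗ b) ∈ V) (i : Fin n) (c : ℕ) :
    carry p i c ∈ V := by
  cases c with
  | zero => exact zero_mem V
  | succ c =>
    rw [carry]
    split_ifs
    · exact hp _
    · exact zero_mem V

theorem sum_inrₗ_mul_eq_carry (p : OvlRow m μ d → K[X]) (i : Fin n) (c : ℕ) :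
    ∑ b : OvlRowExtra μ d, p (Sum.inrₗ b) *
      (if (ofLex b).1 = i ∧ c = (ofLex b).2 + 1 then 1 else 0) = carry p i c := by
  by_cases hb₀ : ∃ b₀ : OvlRowExtra μ d, (ofLex b₀).1 = i ∧ c = (ofLex b₀).2 + 1
  · obtain ⟨b₀, rfl, rfl⟩ := hb₀
    rw [carry_eq, Fintype.sum_eq_single b₀, if_pos ⟨rfl, rfl⟩, mul_one]
    intro b hb
    refine mul_eq_zero_of_right _ (if_neg fun ⟨hfst, hsnd⟩ => hb (Sigma.ext hfst ?_))
    exact (Fin.heq_ext_iff (congrArg (ovlα μ d · - 1) hfst)).2 (Nat.succ_injective hsnd).symm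
  · rw [Finset.sum_eq_zero fun b _ => mul_eq_zero_of_right _ (if_neg fun hb => hb₀ ⟨b, hb⟩)]
    cases c with
    | zero => rfl
    | succ c => rw [carry, dif_neg fun hc => hb₀ ⟨toLex ⟨i, c, hc⟩, rfl, rfl⟩]

theorem vecMul_ovlL_of_ovlα_le_one {i : Fin n} (hα : ovlα μ d i ≤ 1)
    (F : Matrix (Fin m) (Fin n) K[X]) (p : OvlRow m μ d → K[X]) (e : Fin (ovlγ μ d i)) :
    (p ᵥ* ovlL K μ d F) (toLex ⟨i, e⟩) = (p ∘ Sum.inlₗ ᵥ* F) i := by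
  have hγ : ovlγ μ d i = 1 := max_eq_right hα
  have hcarry : carry p i e = 0 := by rw [show (e : ℕ) = 0 by omega, carry]
  rw [vecMul, dotProduct, ← Equiv.sum_comp toLex, Fintype.sum_sum_type,
    ← add_zero ((p ∘ Sum.inlₗ ᵥ* F) i), ← hcarry]
  refine congrArg₂ (· + ·) ?_ (sum_inrₗ_mul_eq_carry p i e)
  exact Finset.sum_congr rfl fun a _ => congrArg (p (Sum.inlₗ a) * ·) (if_pos hα)

theorem vecMul_ovlL_of_one_lt_ovlα {i : Fin n} (hα : 1 < ovlα μ d i)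
    (F : Matrix (Fin m) (Fin n) K[X]) (p : OvlRow m μ d → K[X]) (e : Fin (ovlγ μ d i)) :
    (p ᵥ* ovlL K μ d F) (toLex ⟨i, e⟩) =
      digitProd μ F (p ∘ Sum.inlₗ) i e + digitProd μ F (p ∘ Sum.inlₗ) i (e + 1) * X ^ μ +
        carry p i e := by
  rw [vecMul, dotProduct, ← Equiv.sum_comp toLex, Fintype.sum_sum_type]
  refine congrArg₂ (· + ·) ?_ (sum_inrₗ_mul_eq_carry p i e)
  simp only [digitProd, vecMul, dotProduct, map_apply, Finset.sum_mul, mul_assoc]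
  rw [← Finset.sum_add_distrib]
  refine Finset.sum_congr rfl fun a _ => ?_
  rw [Function.comp_apply, ← mul_add]
  exact congrArg (p (Sum.inlₗ a) * ·) (if_neg hα.not_ge)

theorem mem_appMod_iff {ι κ : Type*} [Fintype ι] {ord : κ → ℕ} {L : Matrix ι κ K[X]}
    {v : ι → K[X]} : v ∈ appMod ord L ↔ ∀ c, X ^ ord c ∣ (v ᵥ* L) c := by
  simp only [appMod, Submodule.mem_comap, Submodule.mem_pi, Set.mem_univ, true_imp_iff,
    Ideal.mem_span_singleton, vecMulLinear_apply]

theorem mem_appMod_ovlL_iff :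
    p ∈ appMod (ovlOrder μ d) (ovlL K μ d F) ↔ ∀ i,
      if ovlα μ d i ≤ 1 then X ^ d i ∣ (p ∘ Sum.inlₗ ᵥ* F) i
      else IsOverlapApprox μ (ovlα μ d i) (ovlβ μ d i) (digitProd μ F (p ∘ Sum.inlₗ) i)
        (carry p i) := by
  have hblock : p ∈ appMod (ovlOrder μ d) (ovlL K μ d F) ↔ ∀ i, ∀ e : Fin (ovlγ μ d i),
      X ^ ovlOrder μ d (toLex ⟨i, e⟩) ∣ (p ᵥ* ovlL K μ d F) (toLex ⟨i, e⟩) :=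
    mem_appMod_iff.trans ⟨fun h i e => h _, fun h c => h (ofLex c).1 (ofLex c).2⟩
  rw [hblock]
  refine forall_congr' fun i => ?_
  split_ifs with hα
  · have hγ : 0 < ovlγ μ d i := le_max_right _ 1
    have hord (e : Fin (ovlγ μ d i)) : ovlOrder μ d (toLex ⟨i, e⟩) = d i := if_pos hα
    simp only [vecMul_ovlL_of_ovlα_le_one hα, hord]
    exact ⟨fun h => h ⟨0, hγ⟩, fun h _ => h⟩
  · have hγ : ovlγ μ d i = ovlα μ d i := max_eq_left (by omega)
    have hord (e : Fin (ovlγ μ d i)) : ovlOrder μ d (toLex ⟨i, e⟩) =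
        if (e : ℕ) + 1 = ovlα μ d i then μ + ovlβ μ d i else 2 * μ :=
      (if_neg hα).trans (if_congr (by change (e : ℕ) = ovlγ μ d i - 1 ↔ _; omega) rfl rfl)
    simp only [vecMul_ovlL_of_one_lt_ovlα (not_le.1 hα), hord]
    exact ⟨fun h c hc => h ⟨c, hγ ▸ hc⟩, fun h e => h e (hγ ▸ e.2)⟩

/-- The tuple `t = (s, μ-1, …, μ-1)` indexed by the rows of the overlapping linearization. -/
def ovlShift (s : Fin m → ℕ) (μ : ℕ) (d : Fin n → ℕ) (c : OvlRow m μ d) : ℤ :=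
  Sum.elim (fun i => (s i : ℤ)) (fun _ => (μ : ℤ) - 1) (ofLex c)

theorem rdegRow_neg_ovlShift_le_iff {e : ℤ} :
    rdegRow (fun c => -ovlShift s μ d c) p ≤ (e : WithBot ℤ) ↔
      (∀ a, p (Sum.inlₗ a) ∈ degLE K (s a + e)) ∧ ∀ b, p (Sum.inrₗ b) ∈ degLE K (μ - 1 + e) := by
  rw [rdegRow_neg_le_iff]
  refine ⟨fun h => ⟨fun a => h (Sum.inlₗ a), fun b => h (Sum.inrₗ b)⟩, fun h c => ?_⟩
  match c with
  | Sum.inlₗ a => exact h.1 a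
  | Sum.inrₗ b => exact h.2 b

theorem xAdicSum_digitProd_ovl (hμ : 0 < μ) {i : Fin n}
    (hF : ∀ a, F a i ∈ degLE K (d i - 1 - s a)) (u : Fin m → K[X]) :
    xAdicSum μ (digitProd μ F u i) (ovlα μ d i + 1) = (u ᵥ* F) i := by
  refine xAdicSum_digitProd fun a => degLE_mono ?_ (hF a)
  have hdecomp := ovlα_mul_add_ovlβ μ d i
  have hβ := ovlβ_le hμ d i
  rw [add_mul, one_mul]
  omega

theorem carry_mul_X_pow_eq_xAdicSum (hs : ∀ a, s a < μ)
    (hp : p ∈ appMod (ovlOrder μ d) (ovlL K μ d F))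
    (hdeg : rdegRow (fun c => -ovlShift s μ d c) p ≤ ((0 : ℤ) : WithBot ℤ))
    (b : OvlRowExtra μ d) :
    p (Sum.inrₗ b) * X ^ (((ofLex b).2 + 1) * μ) =
      xAdicSum μ (digitProd μ F (p ∘ Sum.inlₗ) (ofLex b).1) ((ofLex b).2 + 1) := by
  obtain ⟨hu, hq⟩ := rdegRow_neg_ovlShift_le_iff.1 hdeg
  have hlt := (ofLex b).2.2
  have hoverlap := mem_appMod_ovlL_iff.1 hp (ofLex b).1
  rw [if_neg (by omega)] at hoverlap
  rw [← carry_eq p b]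
  exact hoverlap.mul_X_pow_eq_xAdicSum rfl
    (fun c => degLE_mono (by omega) (digitProd_mem_degLE hs hu c))
    (carry_mem (add_zero ((μ : ℤ) - 1) ▸ hq) _) (by omega)

theorem comp_inlₗ_mem_leftKernel (hμ : 0 < μ) (hs : ∀ a, s a < μ)
    (hF : ∀ i a, F a i ∈ degLE K (d i - 1 - s a))
    (hp : p ∈ appMod (ovlOrder μ d) (ovlL K μ d F))
    (hdeg : rdegRow (fun c => -ovlShift s μ d c) p ≤ ((0 : ℤ) : WithBot ℤ)) :
    p ∘ Sum.inlₗ ∈ leftKernel F := by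
  obtain ⟨hu, hq⟩ := rdegRow_neg_ovlShift_le_iff.1 hdeg
  refine LinearMap.mem_ker.2 (funext fun i => ?_)
  have hdegree : (p ∘ Sum.inlₗ ᵥ* F) i ∈ degLE K (d i - 1) :=
    zero_add ((d i : ℤ) - 1) ▸ vecMul_mem_degLE hu (hF i)
  suffices hdvd : X ^ d i ∣ (p ∘ Sum.inlₗ ᵥ* F) i from eq_zero_of_X_pow_dvd hdegree hdvd
  have hi := mem_appMod_ovlL_iff.1 hp i
  split_ifs at hi with hα
  · exact hi
  · rw [← xAdicSum_digitProd_ovl hμ (hF i), ← ovlα_mul_add_ovlβ μ d i]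
    exact hi.X_pow_dvd_xAdicSum (by omega) rfl
      (fun c => degLE_mono (by omega) (digitProd_mem_degLE hs hu c))
      (carry_mem (add_zero ((μ : ℤ) - 1) ▸ hq) i)

theorem isLeftDominant_of_rdegRow_nonpos (hs : ∀ a, s a < μ)
    (hp : p ∈ appMod (ovlOrder μ d) (ovlL K μ d F))
    (hdeg : rdegRow (fun c => -ovlShift s μ d c) p ≤ ((0 : ℤ) : WithBot ℤ)) :
    IsLeftDominant (fun c => -ovlShift s μ d c) p := by
  refine isLeftDominant_of_forall_mem_degLE fun e he b => ?_
  have hu : ∀ a, p (Sum.inlₗ a) ∈ degLE K (s a + e) := rdegRow_neg_le_iff.1 he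
  have hcarry := mem_degLE_of_mul_X_pow_eq_xAdicSum (digitProd_mem_degLE hs hu)
    (carry_mul_X_pow_eq_xAdicSum hs hp hdeg b)
  have hshift : ovlShift s μ d (Sum.inrₗ b) = μ - 1 := rfl
  exact degLE_mono (by rw [hshift]; omega) hcarry

theorem exists_mem_appMod_of_mem_leftKernel (hμ : 0 < μ) (hs : ∀ a, s a < μ)
    (hF : ∀ i a, F a i ∈ degLE K (d i - 1 - s a)) {u : Fin m → K[X]} (hu : u ∈ leftKernel F)
    (hdeg : rdegRow (fun a => -(s a : ℤ)) u ≤ ((0 : ℤ) : WithBot ℤ)) :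
    ∃ p ∈ appMod (ovlOrder μ d) (ovlL K μ d F),
      rdegRow (fun c => -ovlShift s μ d c) p ≤ ((0 : ℤ) : WithBot ℤ) ∧ p ∘ Sum.inlₗ = u := by
  have huF : ∀ i, (u ᵥ* F) i = 0 := congrFun (LinearMap.mem_ker.1 hu)
  have hsum (i : Fin n) : xAdicSum μ (digitProd μ F u i) (ovlα μ d i + 1) = 0 :=
    (xAdicSum_digitProd_ovl hμ (hF i) u).trans (huF i)
  choose q hq hqsum using fun i =>
    IsOverlapApprox.exists_of_xAdicSum_eq_zero (ovlβ_le hμ d i) (hsum i)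
  let p : OvlRow m μ d → K[X] :=
    fun c => Sum.elim u (fun b => q (ofLex b).1 ((ofLex b).2 + 1)) (ofLex c)
  have hcarry : ∀ i, ∀ c < ovlα μ d i, q i c = carry p i c := by
    rintro i (_ | c) hc
    · simpa only [zero_mul, pow_zero, mul_one, xAdicSum_zero, carry] using hqsum i 0 hc
    · rw [carry, dif_pos (by omega)]
      rfl
  have hudeg : ∀ a, u a ∈ degLE K (s a + 0) := rdegRow_neg_le_iff.1 hdeg
  refine ⟨p, mem_appMod_ovlL_iff.2 fun i => ?_,
    rdegRow_neg_ovlShift_le_iff.2 ⟨hudeg, fun b => ?_⟩, rfl⟩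
  · split_ifs with hα
    · exact (huF i).symm ▸ dvd_zero _
    · exact (hq i).congr (hcarry i)
  · have hlt := (ofLex b).2.2
    exact degLE_mono (by omega) (mem_degLE_of_mul_X_pow_eq_xAdicSum
      (digitProd_mem_degLE hs hudeg) (hqsum (ofLex b).1 ((ofLex b).2 + 1) (by omega)))

end OverlappingLinearization

/-- Lemma 5.9: a `(−t)`-reduced basis `P` of the module of
approximants for the overlapping linearization of `F` contains, in its rows of
nonpositive `(−t)`-degree, a `(−s)`-reduced basis of `ker F` (given by the
first `m` columns of these rows); there are exactly `m − rank F` such rows,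
and weak Popov forms are inherited. -/
theorem kernel_via_overlapping_linearization {K : Type*} [Field K] {m n : ℕ}
    (F : Matrix (Fin m) (Fin n) K[X]) (s : Fin m → ℕ)
    (hker : ∃ (k' : ℕ) (B : Matrix (Fin k') (Fin m) K[X]),
      IsBasisOf B (leftKernel F) ∧
        ∀ i, rdeg (fun j => -(s j : ℤ)) B i ≤ ((0 : ℤ) : WithBot ℤ))
    (μ : ℕ) (hμ : 0 < μ) (hμs : ∀ i, s i < μ)
    (d : Fin n → ℕ) (hd0 : ∀ j, 0 < d j)
    (hd : ∀ j, cdeg (fun i => (s i : ℤ)) F j + 1 ≤ ((d j : ℤ) : WithBot ℤ))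
    (P : Matrix (OvlRow m μ d) (OvlRow m μ d) K[X]) :
    let t : OvlRow m μ d → ℤ :=
      fun c => Sum.elim (fun i : Fin m => (s i : ℤ)) (fun _ => (μ : ℤ) - 1) (ofLex c)
    IsBasisOf P (appMod (ovlOrder μ d) (ovlL K μ d F)) →
    IsReducedForm (fun c => -t c) P →
    let cond : OvlRow m μ d → Prop := fun r => rdeg (fun c => -t c) P r ≤ ((0 : ℤ) : WithBot ℤ)
    let Kmat : Matrix {r // cond r} (Fin m) K[X] :=
      Matrix.of fun r a => P r.1 (toLex (Sum.inl a))
    Nat.card {r // cond r} = m - F.rank ∧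
    IsBasisOf Kmat (leftKernel F) ∧
    IsReducedForm (fun j => -(s j : ℤ)) Kmat ∧
    (IsWeakPopov (fun c => -t c) P → IsWeakPopov (fun j => -(s j : ℤ)) Kmat) := by
  intro t hbasis hreduced cond Kmat
  have hF i := mem_degLE_of_cdeg_add_one_le (hd i)
  have hsmall (r : {r // cond r}) : IsLeftDominant (fun c => -t c) (P r) :=
    isLeftDominant_of_rdegRow_nonpos hμs (hbasis.row_mem r) r.2
  have hKreduced : IsReducedForm (fun j => -(s j : ℤ)) Kmat :=
    (hreduced.submatrix_row Subtype.val_injective).submatrix_inlₗ hsmall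
  have hlift : leftKernel F ≤ Submodule.span K[X] {u | ∃ v ∈ appMod (ovlOrder μ d) (ovlL K μ d F),
      rdegRow (fun c => -t c) v ≤ ((0 : ℤ) : WithBot ℤ) ∧ v ∘ Sum.inlₗ = u} := by
    obtain ⟨_, B, hB, hBdeg⟩ := hker
    rw [← hB.2]
    refine Submodule.span_mono ?_
    rintro _ ⟨i, rfl⟩
    exact exists_mem_appMod_of_mem_leftKernel hμ hμs hF (hB.row_mem i) (hBdeg i)
  have hKbasis : IsBasisOf Kmat (leftKernel F) :=
    ⟨hKreduced.linearIndependent, hreduced.span_submatrix_rdeg_le hbasis.2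
      (fun _ hv hdeg => comp_inlₗ_mem_leftKernel hμ hμs hF hv hdeg) hlift⟩
  refine ⟨?_, hKbasis, hKreduced, fun hweak => ?_⟩
  · rw [hKbasis.natCard_eq_finrank, finrank_leftKernel, Fintype.card_fin]
  · exact (hweak.submatrix_row (Subtype.strictMono_coe _)).submatrix_inlₗ hsmall
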